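/- Let f, g : ℂ⁺ → ℂ⁺ be analytic self-maps of the upper half-plane such that lim_{y→+∞} f(iy)/(iy) = lim_{y→+∞} g(iy)/(iy) = 1. If f ∘ f = g ∘ g on ℂ⁺, then f = g on ℂ⁺. -/

import Mathlib

open Complex Filter Set Topology

/-- The open upper half-plane `ℂ⁺ = {z : ℂ | Im z > 0}`. -/
def UHP : Set ℂ := {z : ℂ | 0 < z.im}

lemma normSq_conj_aux (z w : ℂ) :
    ‖z - (starRingEnd ℂ) w‖ ^ 2 = ‖z - w‖ ^ 2 + 4 * (z.im * w.im) := by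
  rw [← Complex.normSq_eq_norm_sq, ← Complex.normSq_eq_norm_sq, Complex.normSq_apply,
    Complex.normSq_apply]
  simp
  ring

lemma isOpen_UHP : IsOpen UHP := isOpen_lt continuous_const Complex.continuous_im

lemma sub_conj_ne {z w : ℂ} (hz : 0 < z.im) (hw : 0 < w.im) : z - (starRingEnd ℂ) w ≠ 0 := by
  intro h
  have := congrArg Complex.im h
  simp at this
  linarith

/-- Schwarz-Pick in the upper half-plane. -/
lemma schwarz_pick {F : ℂ → ℂ} (hd : DifferentiableOn ℂ F UHP) (hm : MapsTo F UHP UHP)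
    {z w : ℂ} (hz : z ∈ UHP) (hw : w ∈ UHP) :
    ‖F z - F w‖ ^ 2 * (z.im * w.im) ≤ ‖z - w‖ ^ 2 * ((F z).im * (F w).im) := by
  have hz' : 0 < z.im := hz
  have hw' : 0 < w.im := hw
  have hW : 0 < (F w).im := hm hw
  have hZ : 0 < (F z).im := hm hz
  let ψ : ℂ → ℂ := fun ζ => (w - (starRingEnd ℂ) w * ζ) / (1 - ζ)
  have hne : ∀ ζ ∈ Metric.ball (0 : ℂ) 1, (1 - ζ) ≠ 0 := by
    intro ζ hζ h
    have : ζ = 1 := by linear_combination -h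
    subst this
    simp at hζ
  have hψ : MapsTo ψ (Metric.ball 0 1) UHP := by
    intro ζ hζ
    have h1 := hne ζ hζ
    have h2 : 0 < Complex.normSq (1 - ζ) := Complex.normSq_pos.2 h1
    have h3 : Complex.normSq ζ < 1 := by
      rw [Complex.normSq_eq_norm_sq]
      have : ‖ζ‖ < 1 := by simpa using hζ
      nlinarith [norm_nonneg ζ]
    have h4 : (ψ ζ).im = w.im * (1 - Complex.normSq ζ) / Complex.normSq (1 - ζ) := by
      simp only [ψ, Complex.div_im]
      field_simp
      simp [Complex.normSq_apply]
      ring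
    show 0 < (ψ ζ).im
    rw [h4]
    have : 0 < 1 - Complex.normSq ζ := by linarith
    positivity
  have hψd : DifferentiableOn ℂ ψ (Metric.ball 0 1) := by
    apply DifferentiableOn.div
    · fun_prop
    · fun_prop
    · exact hne
  let G : ℂ → ℂ := fun ζ => (F (ψ ζ) - F w) / (F (ψ ζ) - (starRingEnd ℂ) (F w))
  have hGd : DifferentiableOn ℂ G (Metric.ball 0 1) := by
    have := hd.comp hψd hψ
    apply DifferentiableOn.div (this.sub_const _) (this.sub_const _)
    intro ζ hζ
    exact sub_conj_ne (hm (hψ hζ)) hW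
  have hG0 : G 0 = 0 := by simp [G, ψ]
  have hGm : MapsTo G (Metric.ball 0 1) (Metric.closedBall 0 1) := by
    intro ζ hζ
    have hp : 0 < (F (ψ ζ)).im := hm (hψ hζ)
    have h1 := norm_pos_iff.2 (sub_conj_ne hp hW)
    have h2 := normSq_conj_aux (F (ψ ζ)) (F w)
    simp only [G, mem_closedBall_zero_iff, norm_div]
    rw [div_le_one h1]
    have : 0 < (F (ψ ζ)).im * (F w).im := mul_pos hp hW
    apply le_of_sq_le_sq _ h1.le
    linarith
  have hzw := norm_pos_iff.2 (sub_conj_ne hz' hw')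
  have hzw2 := normSq_conj_aux z w
  have hFF := norm_pos_iff.2 (sub_conj_ne hZ hW)
  have hFF2 := normSq_conj_aux (F z) (F w)
  have hp := mul_pos hz' hw'
  have hP := mul_pos hZ hW
  set ζ := (z - w) / (z - (starRingEnd ℂ) w) with hζ
  have hζn : ‖ζ‖ < 1 := by
    rw [hζ, norm_div, div_lt_one hzw]
    apply lt_of_pow_lt_pow_left₀ 2 hzw.le
    linarith
  have hψζ : ψ ζ = z := by
    have h0 := sub_conj_ne hz' hw'
    have h5 : w - (starRingEnd ℂ) w ≠ 0 := sub_conj_ne hw' hw'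
    have h6 : 1 - ζ = (w - (starRingEnd ℂ) w) / (z - (starRingEnd ℂ) w) := by
      rw [hζ]; field_simp; ring
    simp only [ψ]
    rw [h6, hζ]
    field_simp
    ring
  have key := Complex.norm_le_norm_of_mapsTo_ball hGd hGm hG0 hζn
  simp only [G, hψζ] at key
  rw [hζ, norm_div, norm_div, div_le_div_iff₀ hFF hzw] at key
  have k2 := pow_le_pow_left₀ (by positivity) key 2
  rw [mul_pow, mul_pow, hzw2, hFF2] at k2
  linarith

/-- Schwarz-Pick for maps to the closed upper half-plane. -/
lemma schwarz_pick' {F : ℂ → ℂ} (hd : DifferentiableOn ℂ F UHP)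
    (hm : ∀ z ∈ UHP, 0 ≤ (F z).im)
    {z w : ℂ} (hz : z ∈ UHP) (hw : w ∈ UHP) :
    ‖F z - F w‖ ^ 2 * (z.im * w.im) ≤ ‖z - w‖ ^ 2 * ((F z).im * (F w).im) := by
  have h : ∀ ε : ℝ, 0 < ε → ‖F z - F w‖ ^ 2 * (z.im * w.im) ≤
      ‖z - w‖ ^ 2 * (((F z).im + ε) * ((F w).im + ε)) := by
    intro ε hε
    have := schwarz_pick (F := fun z => F z + ε * I) (hd.add_const _)
      (fun z hz => by
        have := hm z hz
        show 0 < (F z + ε * I).im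
        simp; linarith) hz hw
    simpa using this
  have hc : Tendsto (fun ε : ℝ => ‖z - w‖ ^ 2 * (((F z).im + ε) * ((F w).im + ε))) (𝓝[>] 0)
      (𝓝 (‖z - w‖ ^ 2 * (((F z).im + 0) * ((F w).im + 0)))) := by
    apply Tendsto.mono_left _ nhdsWithin_le_nhds
    apply Continuous.tendsto (by fun_prop)
  simp only [add_zero] at hc
  exact ge_of_tendsto hc (eventually_nhdsWithin_of_forall fun ε hε => h ε hε)

lemma I_mul_mem {y : ℝ} (hy : 0 < y) : I * (y : ℂ) ∈ UHP := by
  show 0 < (I * (y : ℂ)).im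
  simpa using hy

/-- Julia's lemma. -/
lemma julia {f : ℂ → ℂ} (hd : DifferentiableOn ℂ f UHP) (hm : MapsTo f UHP UHP)
    (hl : Tendsto (fun y : ℝ => f (I * y) / (I * y)) atTop (𝓝 1))
    {z : ℂ} (hz : z ∈ UHP) : z.im ≤ (f z).im := by
  have h1 : Tendsto (fun y : ℝ => f z / (I * y)) atTop (𝓝 0) := by
    have : Tendsto (fun y : ℝ => (f z / I) * ((y⁻¹ : ℝ) : ℂ)) atTop (𝓝 ((f z / I) * ((0 : ℝ) : ℂ))) :=
      (Complex.continuous_ofReal.tendsto 0 |>.comp tendsto_inv_atTop_zero).const_mul _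
    simp only [ofReal_zero, mul_zero] at this
    refine this.congr fun y => ?_
    push_cast
    simp only [div_eq_mul_inv, mul_inv]
    ring
  have h1' : Tendsto (fun y : ℝ => z / (I * y)) atTop (𝓝 0) := by
    have : Tendsto (fun y : ℝ => (z / I) * ((y⁻¹ : ℝ) : ℂ)) atTop (𝓝 ((z / I) * ((0 : ℝ) : ℂ))) :=
      (Complex.continuous_ofReal.tendsto 0 |>.comp tendsto_inv_atTop_zero).const_mul _
    simp only [ofReal_zero, mul_zero] at this
    refine this.congr fun y => ?_
    push_cast
    simp only [div_eq_mul_inv, mul_inv]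
    ring
  have h2 : Tendsto (fun y : ℝ => ‖f z / (I * y) - f (I * y) / (I * y)‖ ^ 2 * z.im) atTop
      (𝓝 (‖(0 : ℂ) - 1‖ ^ 2 * z.im)) := ((h1.sub hl).norm.pow 2).mul_const _
  have h3 : Tendsto (fun y : ℝ => ‖z / (I * y) - 1‖ ^ 2 *
      ((f z).im * (f (I * y) / (I * y)).re)) atTop
      (𝓝 (‖(0 : ℂ) - 1‖ ^ 2 * ((f z).im * (1 : ℂ).re))) :=
    ((h1'.sub_const 1).norm.pow 2).mul (((Complex.continuous_re.tendsto _).comp hl).const_mul _)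
  have h4 := le_of_tendsto_of_tendsto h2 h3 (by
    filter_upwards [eventually_gt_atTop 0] with y hy
    have hy0 : I * (y : ℂ) ≠ 0 := mul_ne_zero I_ne_zero (by exact_mod_cast hy.ne')
    have sp := schwarz_pick hd hm hz (I_mul_mem hy)
    have e1 : f z / (I * y) - f (I * y) / (I * y) = (f z - f (I * y)) / (I * y) := by ring
    have e2 : z / (I * y) - 1 = (z - I * y) / (I * y) := by rw [sub_div, div_self hy0]
    have e3 : (f (I * y) / (I * y)).re = (f (I * y)).im / y := by
      have : f (I * y) / (I * y) = (f (I * y)) * (-I) / (y : ℂ) := by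
        have : (y : ℂ) ≠ 0 := by exact_mod_cast hy.ne'
        field_simp
        simp
      rw [this, Complex.div_ofReal_re]
      simp
    have e4 : ‖I * (y : ℂ)‖ = y := by simp [abs_of_pos hy]
    have e5 : (I * (y : ℂ)).im = y := by simp
    rw [e1, e2, e3, norm_div, norm_div, e4]
    rw [e5] at sp
    have : 0 < y ^ 3 := by positivity
    rw [← mul_le_mul_iff_left₀ this]
    calc _ = ‖f z - f (I * y)‖ ^ 2 * (z.im * y) := by field_simp
      _ ≤ _ := sp
      _ = _ := by field_simp)
  simpa using h4

/-- A Bloch-type bound: the logarithmic derivative of a nonvanishing injective function. -/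
lemma bloch_log_deriv {E : ℂ → ℂ} {ζ : ℂ} {ρ : ℝ} (hρ : 0 < ρ)
    (hd : DifferentiableOn ℂ E (Metric.ball ζ ρ)) (hinj : InjOn E (Metric.ball ζ ρ))
    (hne : ∀ z ∈ Metric.ball ζ ρ, E z ≠ 0) :
    ρ * ‖deriv E ζ / E ζ‖ ≤ 1000 := by
  by_contra hcon
  push Not at hcon
  set l : ℂ → ℂ := fun z => deriv E z / E z with hl
  have hld : DifferentiableOn ℂ l (Metric.ball ζ ρ) :=
    (hd.deriv Metric.isOpen_ball).div hd hne
  obtain ⟨L, hL⟩ := hld.isExactOn_ball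
  -- E = const * exp L
  have hconst : ∀ x ∈ Metric.ball ζ ρ, ∀ y ∈ Metric.ball ζ ρ,
      E y * exp (-L y) = E x * exp (-L x) := by
    intro x hx y hy
    have := Convex.norm_image_sub_le_of_norm_hasDerivWithin_le (𝕜 := ℂ)
      (f := fun z => E z * exp (-L z)) (f' := fun _ => 0) (C := 0) (s := Metric.ball ζ ρ)
      (x := x) (y := y)
      (by
        intro z hz
        have h1 : HasDerivAt E (deriv E z) z :=
          (hd.differentiableAt (Metric.isOpen_ball.mem_nhds hz)).hasDerivAt
        have h2 := (hL z hz).neg.cexp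
        have h3 := h1.mul h2
        refine (h3.congr_deriv ?_).hasDerivWithinAt
        have := hne z hz
        simp only [hl]
        field_simp
        ring) (by simp) (convex_ball _ _) hx hy
    simp only [zero_mul] at this
    have := norm_le_zero_iff.1 this
    exact sub_eq_zero.1 this
  have hsub : Metric.closedBall ζ (ρ / 2) ⊆ Metric.ball ζ ρ :=
    Metric.closedBall_subset_ball (by linarith)
  have hmc : ContinuousOn (fun z => (ρ / 2 - dist z ζ) * ‖l z‖) (Metric.closedBall ζ (ρ / 2)) := by
    apply ContinuousOn.mul
    · fun_prop
    · exact (hld.continuousOn.mono hsub).norm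
  obtain ⟨w, hw, hmax⟩ := (isCompact_closedBall ζ (ρ / 2)).exists_isMaxOn
    ⟨ζ, Metric.mem_closedBall_self (by linarith)⟩ hmc
  have hmax' : ∀ z ∈ Metric.closedBall ζ (ρ / 2),
      (ρ / 2 - dist z ζ) * ‖l z‖ ≤ (ρ / 2 - dist w ζ) * ‖l w‖ := fun z hz => hmax hz
  have hm0 := hmax' ζ (Metric.mem_closedBall_self (by linarith))
  simp only [dist_self, sub_zero] at hm0
  obtain ⟨t, ht⟩ : ∃ t, t = (ρ / 2 - dist w ζ) / 2 := ⟨_, rfl⟩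
  obtain ⟨N, hN⟩ : ∃ N, N = ‖l w‖ := ⟨_, rfl⟩
  have hNn : 0 ≤ N := hN ▸ norm_nonneg _
  have hdw : dist w ζ = ρ / 2 - 2 * t := by rw [ht]; ring
  have htN : 250 < t * N := by
    have : (ρ / 2 - dist w ζ) * ‖l w‖ = 2 * (t * N) := by rw [hdw, hN]; ring
    rw [this] at hm0
    have : ρ * ‖l ζ‖ > 1000 := hcon
    linarith
  have ht0 : 0 < t := by
    by_contra h
    push Not at h
    nlinarith
  have hN0 : 0 < N := by
    by_contra h
    push Not at h
    nlinarith
  have hball : Metric.ball w t ⊆ Metric.ball ζ ρ := by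
    apply Metric.ball_subset_ball'
    rw [hdw]; linarith
  have hlb : ∀ z ∈ Metric.ball w t, ‖l z‖ ≤ 2 * N := by
    intro z hz
    have h1 : dist z w < t := hz
    have h2 : dist z ζ ≤ dist z w + dist w ζ := dist_triangle _ _ _
    have h3 := hmax' z (by rw [Metric.mem_closedBall]; linarith)
    have h4 : t * ‖l z‖ ≤ (ρ / 2 - dist z ζ) * ‖l z‖ :=
      mul_le_mul_of_nonneg_right (by linarith) (norm_nonneg _)
    have h5 : (ρ / 2 - dist w ζ) * ‖l w‖ = t * (2 * N) := by rw [hdw, hN]; ring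
    rw [h5] at h3
    exact le_of_mul_le_mul_left (h4.trans h3) ht0
  have hmaps : MapsTo l (Metric.ball w t) (Metric.closedBall (l w) (3 * N)) := by
    intro z hz
    rw [Metric.mem_closedBall, dist_eq_norm]
    have := norm_sub_le (l z) (l w)
    have := hlb z hz
    linarith
  have hsmall : Metric.closedBall w (t / 6) ⊆ Metric.ball w t :=
    Metric.closedBall_subset_ball (by linarith)
  have hlip : ∀ z ∈ Metric.closedBall w (t / 6), ‖l z - l w‖ ≤ N / 2 := by
    intro z hz
    have h1 := Complex.dist_le_div_mul_dist_of_mapsTo_ball (hld.mono hball) hmaps (hsmall hz)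
    have h2 : dist z w ≤ t / 6 := hz
    rw [dist_eq_norm] at h1
    have h3 : 3 * N / t * dist z w ≤ 3 * N / t * (t / 6) :=
      mul_le_mul_of_nonneg_left h2 (by positivity)
    have h4 : 3 * N / t * (t / 6) = N / 2 := by field_simp; norm_num
    linarith
  have hsphere : ∀ z ∈ Metric.sphere w (t / 6), t * N / 12 ≤ ‖L z - L w‖ := by
    intro z hz
    have hzc : z ∈ Metric.closedBall w (t / 6) := Metric.sphere_subset_closedBall hz
    have hzd : ‖z - w‖ = t / 6 := by rw [← dist_eq_norm]; exact hz
    have := Convex.norm_image_sub_le_of_norm_hasDerivWithin_le (𝕜 := ℂ)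
      (f := fun z => L z - l w * z) (f' := fun z => l z - l w) (C := N / 2)
      (s := Metric.closedBall w (t / 6)) (x := w) (y := z)
      (by
        intro x hx
        have h1 := hL x (hball (hsmall hx))
        have h2 : HasDerivAt (fun z => l w * z) (l w) x := by
          simpa using (hasDerivAt_id x).const_mul (l w)
        exact (h1.sub h2).hasDerivWithinAt) hlip (convex_closedBall _ _)
      (Metric.mem_closedBall_self (by linarith)) hzc
    rw [hzd] at this
    have h1 : l w * (z - w) = (L z - L w) - (L z - l w * z - (L w - l w * w)) := by ring
    have h2 : ‖l w * (z - w)‖ = N * (t / 6) := by rw [norm_mul, hzd, hN]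
    have h3 := norm_sub_le (L z - L w) (L z - l w * z - (L w - l w * w))
    rw [← h1, h2] at h3
    linarith
  have hdc : DiffContOnCl ℂ L (Metric.ball w (t / 6)) := by
    apply DifferentiableOn.diffContOnCl
    rw [closure_ball _ (by positivity)]
    intro x hx
    exact (hL x (hball (hsmall hx))).differentiableAt.differentiableWithinAt
  have hwb : w ∈ Metric.ball ζ ρ := hsub hw
  have hfr : ∃ᶠ z in 𝓝 w, L z ≠ L w := by
    have h1 : l w ≠ 0 := by
      intro h
      rw [h, norm_zero] at hN
      linarith
    have h2 : ∀ᶠ z in 𝓝[≠] w, L z ≠ L w := (hL w hwb).eventually_ne h1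
    exact h2.frequently.filter_mono nhdsWithin_le_nhds
  have hcov := hdc.ball_subset_image_closedBall (by positivity) hsphere hfr
  have hmem : L w + 2 * Real.pi * I ∈ Metric.ball (L w) (t * N / 12 / 2) := by
    rw [Metric.mem_ball, dist_eq_norm]
    have : L w + 2 * Real.pi * I - L w = ((2 * Real.pi : ℝ) : ℂ) * I := by push_cast; ring
    rw [this, norm_mul, norm_I, mul_one, Complex.norm_real, Real.norm_eq_abs,
      abs_of_pos (by positivity)]
    have := Real.pi_lt_d2
    linarith
  obtain ⟨x, hx, hxL⟩ := hcov hmem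
  have hxb := hball (hsmall hx)
  have h1 := hconst w hwb x hxb
  rw [hxL] at h1
  have h2 : exp (-(L w + 2 * Real.pi * I)) = exp (-L w) := by
    rw [neg_add, ← sub_eq_add_neg, Complex.exp_periodic.sub_eq]
  rw [h2] at h1
  have h3 := mul_right_cancel₀ (Complex.exp_ne_zero _) h1
  have h4 := hinj hxb hwb h3
  rw [h4] at hxL
  have : (2 * Real.pi * I : ℂ) = 0 := by linear_combination -hxL
  simp at this

lemma growth {E : ℂ → ℂ} {b c : ℂ} {ρ : ℝ} {S : Set ℂ} (hρ : 0 < ρ)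
    (hS : ∀ x ∈ segment ℝ b c, Metric.ball x ρ ⊆ S)
    (hd : DifferentiableOn ℂ E S) (hinj : InjOn E S) (hne : ∀ z ∈ S, E z ≠ 0) :
    ‖E c‖ ≤ ‖E b‖ * Real.exp (1000 / ρ * ‖c - b‖) := by
  have hseg : ∀ t ∈ Icc (0 : ℝ) 1, b + t * (c - b) ∈ segment ℝ b c := by
    intro t ht
    rw [segment_eq_image']
    exact ⟨t, ht, by simp⟩
  have hder : ∀ t ∈ Icc (0 : ℝ) 1, HasDerivAt (fun t : ℝ => E (b + t * (c - b)))
      (deriv E (b + t * (c - b)) * (c - b)) t := by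
    intro t ht
    have h1 := hS _ (hseg t ht)
    have h2 : HasDerivAt E (deriv E (b + t * (c - b))) (b + t * (c - b)) :=
      (hd.differentiableAt (mem_of_superset (Metric.ball_mem_nhds _ hρ) h1)).hasDerivAt
    have h3 : HasDerivAt (fun t : ℝ => b + (t : ℂ) * (c - b)) (c - b) t := by
      simpa using ((Complex.ofRealCLM.hasDerivAt (x := t)).mul_const (c - b)).const_add b
    exact h2.comp t h3
  have := norm_le_gronwallBound_of_norm_deriv_right_le
    (f := fun t : ℝ => E (b + t * (c - b))) (f' := fun t : ℝ => deriv E (b + t * (c - b)) * (c - b))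
    (δ := ‖E b‖) (K := 1000 / ρ * ‖c - b‖) (ε := 0) (a := 0) (b := 1)
    (fun t ht => (hder t ht).continuousAt.continuousWithinAt)
    (fun t ht => (hder t (Ico_subset_Icc_self ht)).hasDerivWithinAt) (by simp)
    (by
      intro t ht
      have h1 := hS _ (hseg t (Ico_subset_Icc_self ht))
      have h2 := bloch_log_deriv hρ (hd.mono h1) (hinj.mono h1) (fun z hz => hne z (h1 hz))
      have h3 : 0 < ‖E (b + t * (c - b))‖ :=
        norm_pos_iff.2 (hne _ (h1 (Metric.mem_ball_self hρ)))
      rw [norm_div] at h2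
      have h4 : ‖deriv E (b + t * (c - b))‖ ≤ 1000 / ρ * ‖E (b + t * (c - b))‖ := by
        rw [div_mul_eq_mul_div, le_div_iff₀ hρ]
        rw [← mul_div_assoc, div_le_iff₀ h3] at h2
        linarith
      rw [norm_mul, add_zero]
      calc _ ≤ 1000 / ρ * ‖E (b + t * (c - b))‖ * ‖c - b‖ :=
            mul_le_mul_of_nonneg_right h4 (norm_nonneg _)
        _ = _ := by ring) 1 (by simp)
  rw [gronwallBound_ε0] at this
  simpa using this

lemma im_sq_le (z w : ℂ) : (z.im - w.im) ^ 2 ≤ ‖z - w‖ ^ 2 := by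
  have := Complex.abs_im_le_norm (z - w)
  rw [← sq_abs (z.im - w.im)]
  exact pow_le_pow_left₀ (abs_nonneg _) (by simpa using this) 2

/-- Schwarz-Pick for the displacement `f z - z`. -/
lemma sp_disp {f : ℂ → ℂ} (hd : DifferentiableOn ℂ f UHP) (hj : ∀ z ∈ UHP, z.im ≤ (f z).im)
    {z w : ℂ} (hz : z ∈ UHP) (hw : w ∈ UHP) :
    ‖(f z - z) - (f w - w)‖ ^ 2 * (z.im * w.im) ≤
      ‖z - w‖ ^ 2 * (((f z).im - z.im) * ((f w).im - w.im)) := by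
  have := schwarz_pick' (F := fun z => f z - z) (hd.sub differentiableOn_id)
    (fun z hz => by simpa using hj z hz) hz hw
  simpa using this

lemma im_near {Y : ℝ} {z : ℂ} {r : ℝ} (hz : ‖z - I * Y‖ ≤ r) : Y - r ≤ z.im := by
  have h1 := (Complex.abs_im_le_norm (z - I * Y)).trans hz
  have h2 := (abs_le.1 h1).1
  simp at h2
  linarith

lemma near_bound {f : ℂ → ℂ} (hd : DifferentiableOn ℂ f UHP) (hj : ∀ z ∈ UHP, z.im ≤ (f z).im)
    {Y : ℝ} (hY : 0 < Y) {z : ℂ} (hz : ‖z - I * Y‖ ≤ Y / 2) :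
    ‖f z - z‖ ≤ 2 * ‖f (I * Y) - I * Y‖ := by
  have hi := im_near hz
  have hzU : z ∈ UHP := by show 0 < z.im; linarith
  have sp := sp_disp hd hj hzU (I_mul_mem hY)
  have e5 : (I * (Y : ℂ)).im = Y := by simp
  have hA : (f z).im - z.im ≤ ‖f z - z‖ := by
    simpa using (Complex.im_le_norm (f z - z))
  have hB : (f (I * Y)).im - (I * (Y : ℂ)).im ≤ ‖f (I * Y) - I * Y‖ := by
    rw [← Complex.sub_im]
    exact (Complex.im_le_norm (f (I * Y) - I * Y))
  have hA0 := hj z hzU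
  have hB0 := hj _ (I_mul_mem hY)
  have hAB := abs_norm_sub_norm_le (f z - z) (f (I * Y) - I * Y)
  have hAB2 := pow_le_pow_left₀ (abs_nonneg _) hAB 2
  rw [sq_abs] at hAB2
  have h1 : ((f z).im - z.im) * ((f (I * Y)).im - (I * (Y : ℂ)).im) ≤
      ‖f z - z‖ * ‖f (I * Y) - I * Y‖ :=
    mul_le_mul hA hB (by linarith) (norm_nonneg _)
  have h2 : ‖z - I * Y‖ ^ 2 ≤ (Y / 2) ^ 2 := pow_le_pow_left₀ (norm_nonneg _) hz 2
  set A := ‖f z - z‖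
  set B := ‖f (I * Y) - I * Y‖
  have hAn : 0 ≤ A := norm_nonneg _
  have hBn : 0 ≤ B := norm_nonneg _
  have h3 : ‖z - I * Y‖ ^ 2 * (((f z).im - z.im) * ((f (I * Y)).im - (I * (Y : ℂ)).im)) ≤
      (Y / 2) ^ 2 * (A * B) :=
    mul_le_mul h2 h1 (mul_nonneg (by linarith) (by linarith)) (by positivity)
  rw [e5] at sp h3
  have h4 : (A - B) ^ 2 * (Y / 2 * Y) ≤ (Y / 2) ^ 2 * (A * B) := by
    refine le_trans ?_ (sp.trans h3)
    apply mul_le_mul hAB2 _ (by positivity) (by positivity)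
    apply mul_le_mul_of_nonneg_right _ hY.le
    linarith
  have h5 : (A - B) ^ 2 ≤ A * B / 2 := by
    have : 0 < Y / 2 * Y := by positivity
    apply le_of_mul_le_mul_right _ this
    linarith
  by_contra hcon
  push Not at hcon
  nlinarith

lemma near_bound_comp {f : ℂ → ℂ} (hd : DifferentiableOn ℂ f UHP)
    (hj : ∀ z ∈ UHP, z.im ≤ (f z).im)
    {Y : ℝ} (hY : 0 < Y) (hp : ‖f (I * Y) - I * Y‖ ≤ Y / 20) {z : ℂ}
    (hz : ‖z - I * Y‖ ≤ Y / 4) :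
    ‖f (f z) - z‖ ≤ 4 * ‖f (I * Y) - I * Y‖ := by
  have h1 := near_bound hd hj hY (z := z) (by linarith)
  have h2 : ‖f z - I * Y‖ ≤ Y / 2 := by
    have : f z - I * Y = (f z - z) + (z - I * Y) := by ring
    rw [this]
    have := norm_add_le (f z - z) (z - I * Y)
    linarith
  have h3 := near_bound hd hj hY h2
  have : f (f z) - z = (f (f z) - f z) + (f z - z) := by ring
  rw [this]
  have := norm_add_le (f (f z) - f z) (f z - z)
  linarith

lemma disp_small {f : ℂ → ℂ}
    (hl : Tendsto (fun y : ℝ => f (I * y) / (I * y)) atTop (𝓝 1)) {δ : ℝ} (hδ : 0 < δ) :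
    ∀ᶠ Y : ℝ in atTop, ‖f (I * Y) - I * Y‖ ≤ δ * Y := by
  have h1 := (Metric.tendsto_nhds.1 hl) δ hδ
  filter_upwards [h1, eventually_gt_atTop 0] with y h hy
  have hy0 : I * (y : ℂ) ≠ 0 := mul_ne_zero I_ne_zero (by exact_mod_cast hy.ne')
  have e4 : ‖I * (y : ℂ)‖ = y := by simp [abs_of_pos hy]
  rw [dist_eq_norm] at h
  have : f (I * y) - I * y = (f (I * y) / (I * y) - 1) * (I * y) := by
    rw [sub_mul, div_mul_cancel₀ _ hy0, one_mul]
  rw [this, norm_mul, e4]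
  exact mul_le_mul_of_nonneg_right h.le hy.le

lemma iter_maps {h : ℂ → ℂ} (hm : MapsTo h UHP UHP) (n : ℕ) : MapsTo (h^[n]) UHP UHP :=
  hm.iterate n

lemma iter_diff {h : ℂ → ℂ} (hd : DifferentiableOn ℂ h UHP) (hm : MapsTo h UHP UHP) (n : ℕ) :
    DifferentiableOn ℂ (h^[n]) UHP := hd.iterate hm n

lemma slow_growth {h : ℂ → ℂ} (hd : DifferentiableOn ℂ h UHP) (hm : MapsTo h UHP UHP)
    (hj : ∀ z ∈ UHP, z.im ≤ (h z).im)
    (hs : ∀ κ : ℝ, 0 < κ → ∃ Y : ℝ, 0 < Y ∧ ‖h (I * Y) - I * Y‖ ≤ κ * Y)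
    {z : ℂ} (hz : z ∈ UHP) {η : ℝ} (hη : 0 < η) :
    ∃ n : ℕ, (h^[n + 1] z).im ≤ (1 + η) * (h^[n] z).im := by
  by_contra hcon
  push Not at hcon
  have hz0 : 0 < z.im := hz
  obtain ⟨e, he⟩ : ∃ e, e = η / 2 := ⟨_, rfl⟩
  have he0 : 0 < e := by rw [he]; linarith
  have hy : ∀ n : ℕ, (1 + η) ^ n * z.im ≤ (h^[n] z).im := by
    intro n
    induction n with
    | zero => simp
    | succ n ih =>
      refine le_trans ?_ (hcon n).le
      rw [pow_succ]
      have : (1 + η) * ((1 + η) ^ n * z.im) ≤ (1 + η) * (h^[n] z).im :=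
        mul_le_mul_of_nonneg_left ih (by linarith)
      linarith
  obtain ⟨Y, hY, hYs⟩ := hs (e / (1 + e)) (by positivity)
  have hYU := I_mul_mem hY
  have e5 : (I * (Y : ℂ)).im = Y := by simp
  have hvpos : ∀ n, 0 < (h^[n] (I * Y)).im := fun n => iter_maps hm n hYU
  have hv1 : ∀ n : ℕ, (h^[n + 1] (I * Y)).im ≤ (1 + e) * (h^[n] (I * Y)).im := by
    intro n
    have sp := schwarz_pick (iter_diff hd hm n) (iter_maps hm n) (hm hYU) hYU
    rw [← Function.iterate_succ_apply, e5] at sp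
    have h1 := hj _ hYU
    rw [e5] at h1
    have h2 := im_sq_le (h^[n + 1] (I * Y)) (h^[n] (I * Y))
    have h3 := pow_le_pow_left₀ (norm_nonneg _) hYs 2
    have ha := hvpos (n + 1)
    have hv := hvpos n
    set a := (h^[n + 1] (I * Y)).im
    set v := (h^[n] (I * Y)).im
    have h4 : (a - v) ^ 2 * (Y * Y) ≤ (e / (1 + e) * Y) ^ 2 * (a * v) := by
      calc _ ≤ ‖h^[n + 1] (I * Y) - h^[n] (I * Y)‖ ^ 2 * ((h (I * Y)).im * Y) := by
            apply mul_le_mul h2 _ (by positivity) (by positivity)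
            exact mul_le_mul_of_nonneg_right h1 hY.le
        _ ≤ _ := sp
        _ ≤ _ := mul_le_mul_of_nonneg_right h3 (by positivity)
    have h5 : (1 + e) * (a - v) ^ 2 ≤ e ^ 2 * (a * v) := by
      have h6 : (a - v) ^ 2 ≤ (e / (1 + e)) ^ 2 * (a * v) := by
        have : 0 < Y * Y := by positivity
        apply le_of_mul_le_mul_right _ this
        linarith
      rw [div_pow, div_mul_eq_mul_div, le_div_iff₀ (by positivity)] at h6
      have h7 : (1 + e) * (a - v) ^ 2 ≤ (a - v) ^ 2 * (1 + e) ^ 2 := by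
        nlinarith [sq_nonneg (a - v), mul_nonneg he0.le (sq_nonneg (a - v)),
          mul_nonneg (sq_nonneg e) (sq_nonneg (a - v))]
      linarith
    by_contra hc
    push Not at hc
    have h8 : 0 < (a - (1 + e) * v) * ((1 + e) * a - v) := by
      apply mul_pos (by linarith)
      nlinarith [mul_pos he0 ha, mul_pos he0 hv]
    nlinarith
  have hv : ∀ n : ℕ, (h^[n] (I * Y)).im ≤ (1 + e) ^ n * Y := by
    intro n
    induction n with
    | zero => simp
    | succ n ih =>
      refine le_trans (hv1 n) ?_
      rw [pow_succ]
      have := mul_le_mul_of_nonneg_left ih (by linarith : (0 : ℝ) ≤ 1 + e)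
      linarith
  obtain ⟨D, hD⟩ : ∃ D, D = ‖z - I * Y‖ ^ 2 / (z.im * Y) := ⟨_, rfl⟩
  have hD0 : 0 ≤ D := by rw [hD]; positivity
  have hcmp : ∀ n : ℕ, (h^[n] z).im ≤ (D + 2) * (h^[n] (I * Y)).im := by
    intro n
    have sp := schwarz_pick (iter_diff hd hm n) (iter_maps hm n) hz hYU
    have h2 := im_sq_le (h^[n] z) (h^[n] (I * Y))
    have ha : 0 < (h^[n] z).im := iter_maps hm n hz
    have hv := hvpos n
    rw [e5] at sp
    set a := (h^[n] z).im
    set v := (h^[n] (I * Y)).im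
    have h3 : (a - v) ^ 2 ≤ D * (a * v) := by
      rw [hD, div_mul_eq_mul_div, le_div_iff₀ (by positivity)]
      exact (mul_le_mul_of_nonneg_right h2 (by positivity)).trans sp
    by_contra hc
    push Not at hc
    nlinarith [mul_pos ha hv]
  have hfin : ∀ n : ℕ, ((1 + η) / (1 + e)) ^ n ≤ (D + 2) * Y / z.im := by
    intro n
    rw [div_pow, div_le_div_iff₀ (by positivity) hz0]
    have := mul_le_mul_of_nonneg_left (hv n) (by linarith : (0 : ℝ) ≤ D + 2)
    linarith [hy n, hcmp n]
  have hgt : 1 < (1 + η) / (1 + e) := by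
    rw [one_lt_div (by positivity)]; linarith
  obtain ⟨n, hn⟩ := pow_unbounded_of_one_lt ((D + 2) * Y / z.im) hgt
  linarith [hfin n]

/-- The forward invariant set on which `h` is injective. -/
def stepSet (h : ℂ → ℂ) : Set ℂ := {z | z ∈ UHP ∧ 2 * ‖h z - z‖ ^ 2 < z.im * (h z).im}

lemma stepSet_maps {h : ℂ → ℂ} (hd : DifferentiableOn ℂ h UHP) (hm : MapsTo h UHP UHP) :
    MapsTo h (stepSet h) (stepSet h) := by
  rintro z ⟨hz, hlt⟩
  refine ⟨hm hz, ?_⟩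
  have sp := schwarz_pick hd hm (hm hz) hz
  have h0 : 0 < z.im := hz
  have h1 : 0 < (h z).im := hm hz
  have h2 : 0 < (h (h z)).im := hm (hm hz)
  have h3 : ‖h (h z) - h z‖ ^ 2 * z.im ≤ ‖h z - z‖ ^ 2 * (h (h z)).im := by
    apply le_of_mul_le_mul_right _ h1
    linarith
  have h4 := mul_lt_mul_of_pos_right hlt h2
  apply lt_of_mul_lt_mul_right _ h0.le
  linarith

lemma stepSet_inj {h : ℂ → ℂ} (hd : DifferentiableOn ℂ h UHP)
    (hj : ∀ z ∈ UHP, z.im ≤ (h z).im) : InjOn h (stepSet h) := by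
  have key : ∀ z ∈ stepSet h, (h z).im - z.im < z.im := by
    rintro z ⟨hz, hlt⟩
    have h0 : 0 < z.im := hz
    have h1 := hj z hz
    have h2 := im_sq_le (h z) z
    by_contra hc
    push Not at hc
    nlinarith
  intro z hz w hw he
  have sp := sp_disp hd hj hz.1 hw.1
  have e : (h z - z) - (h w - w) = -(z - w) := by rw [he]; ring
  rw [e, norm_neg] at sp
  have hz1 := key z hz
  have hw1 := key w hw
  have hz2 := hj z hz.1
  have hw2 := hj w hw.1
  have hz0 : 0 < z.im := hz.1
  have hw0 : 0 < w.im := hw.1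
  have h1 : ((h z).im - z.im) * ((h w).im - w.im) < z.im * w.im :=
    mul_lt_mul'' hz1 hw1 (by linarith) (by linarith)
  by_contra hne
  have h2 : 0 < ‖z - w‖ := norm_pos_iff.2 (sub_ne_zero.2 hne)
  have h3 := mul_lt_mul_of_pos_left h1 (pow_pos h2 2)
  linarith

lemma half_step {f : ℂ → ℂ} (hd : DifferentiableOn ℂ f UHP) (hm : MapsTo f UHP UHP)
    (hj : ∀ z ∈ UHP, z.im ≤ (f z).im) {w : ℂ} (hw : w ∈ UHP) {η : ℝ} (hη : 0 < η)
    (hs : (f (f w)).im ≤ (1 + η) * w.im) :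
    ‖(f (f w) - w) - 2 * (f w - w)‖ ≤ η * ‖f w - w‖ := by
  have sp := sp_disp hd hj (hm hw) hw
  have h0 : 0 < w.im := hw
  have h1 : 0 < (f w).im := hm hw
  have j1 := hj w hw
  have j2 := hj _ (hm hw)
  have e : (f (f w) - w) - 2 * (f w - w) = (f (f w) - f w) - (f w - w) := by ring
  rw [e]
  have h2 : ((f (f w)).im - (f w).im) * ((f w).im - w.im) ≤ (η * (f w).im) * (η * w.im) := by
    apply mul_le_mul _ _ (by linarith) (by positivity)
    · have := mul_le_mul_of_nonneg_left j1 hη.le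
      linarith
    · linarith
  have h3 := mul_le_mul_of_nonneg_left h2 (sq_nonneg ‖f w - w‖)
  apply le_of_sq_le_sq _ (by positivity)
  have : 0 < (f w).im * w.im := by positivity
  apply le_of_mul_le_mul_right _ this
  rw [mul_pow]
  linarith

lemma iter_comm {g h : ℂ → ℂ} (hhm : MapsTo h UHP UHP)
    (hc : ∀ z ∈ UHP, g (h z) = h (g z)) (n : ℕ) {z : ℂ} (hz : z ∈ UHP) :
    g (h^[n] z) = h^[n] (g z) := by
  induction n with
  | zero => rfl
  | succ n ih =>
    rw [Function.iterate_succ_apply', Function.iterate_succ_apply', hc _ (hhm.iterate n hz), ih]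

lemma core (f g : ℂ → ℂ)
    (hfd : DifferentiableOn ℂ f UHP) (hfm : MapsTo f UHP UHP)
    (hgd : DifferentiableOn ℂ g UHP) (hgm : MapsTo g UHP UHP)
    (hfl : Tendsto (fun y : ℝ => f (I * y) / (I * y)) atTop (𝓝 1))
    (hfj : ∀ z ∈ UHP, z.im ≤ (f z).im) (hgj : ∀ z ∈ UHP, z.im ≤ (g z).im)
    (hsq : ∀ z ∈ UHP, f (f z) = g (g z)) {Y : ℝ} (hY : 0 < Y)
    (hp : ‖f (I * Y) - I * Y‖ ≤ Y / 20) (hq : ‖g (I * Y) - I * Y‖ ≤ Y / 20)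
    (hseg : f (I * Y) ∉ segment ℝ (g (I * Y)) (I * Y)) : False := by
  have hYU := I_mul_mem hY
  set h : ℂ → ℂ := fun z => f (f z) with hh
  have hhd : DifferentiableOn ℂ h UHP := hfd.comp hfd hfm
  have hhm : MapsTo h UHP UHP := hfm.comp hfm
  have hhj : ∀ z ∈ UHP, z.im ≤ (h z).im := fun z hz => (hfj z hz).trans (hfj _ (hfm hz))
  have hfc : ∀ z ∈ UHP, f (h z) = h (f z) := fun z _ => rfl
  have hgc : ∀ z ∈ UHP, g (h z) = h (g z) := by
    intro z hz
    simp only [hh]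
    rw [hsq z hz, hsq _ (hgm hz)]
  have hhs : ∀ κ : ℝ, 0 < κ → ∃ Y : ℝ, 0 < Y ∧ ‖h (I * Y) - I * Y‖ ≤ κ * Y := by
    intro κ hκ
    obtain ⟨Y, h1, h2, h3⟩ := ((disp_small hfl (by norm_num : (0 : ℝ) < 1 / 20)).and
      ((disp_small hfl (by positivity : 0 < κ / 4)).and (eventually_gt_atTop 0))).exists
    refine ⟨Y, h3, ?_⟩
    have := near_bound_comp hfd hfj h3 (by linarith) (z := I * Y) (by simp; positivity)
    simp only [hh]
    linarith
  have hB : Metric.ball (I * (Y : ℂ)) (Y / 4) ⊆ stepSet h := by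
    intro z hz
    have hz' : ‖z - I * Y‖ ≤ Y / 4 := by
      rw [← dist_eq_norm]; exact (Metric.mem_ball.1 hz).le
    have hi := im_near hz'
    have hzU : z ∈ UHP := by show 0 < z.im; linarith
    refine ⟨hzU, ?_⟩
    have h1 := near_bound_comp hfd hfj hY hp hz'
    have h2 := hhj z hzU
    have h3 : ‖h z - z‖ ≤ Y / 5 := by simp only [hh]; linarith
    have h4 := pow_le_pow_left₀ (norm_nonneg _) h3 2
    have h5 : (3 * Y / 4) * (3 * Y / 4) ≤ z.im * (h z).im :=
      mul_le_mul (by linarith) (by linarith) (by linarith) (by linarith)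
    nlinarith
  have hBU : Metric.ball (I * (Y : ℂ)) (Y / 4) ⊆ UHP := fun z hz => (hB hz).1
  have hinj : ∀ n : ℕ, InjOn (h^[n]) (Metric.ball (I * (Y : ℂ)) (Y / 4)) := fun n =>
    ((stepSet_inj hhd hhj).iterate (stepSet_maps hhd hhm) n).mono hB
  have haB : f (I * Y) ∈ Metric.ball (I * (Y : ℂ)) (Y / 4) := by
    rw [Metric.mem_ball, dist_eq_norm]; linarith
  have hbB : g (I * Y) ∈ Metric.ball (I * (Y : ℂ)) (Y / 4) := by
    rw [Metric.mem_ball, dist_eq_norm]; linarith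
  have hcB : I * (Y : ℂ) ∈ Metric.ball (I * (Y : ℂ)) (Y / 4) :=
    Metric.mem_ball_self (by positivity)
  set c : ℂ := I * (Y : ℂ) with hc
  obtain ⟨S, hS⟩ : ∃ S : Set ℂ, S = Metric.ball c (Y / 4) \ {f c} := ⟨_, rfl⟩
  have hSo : IsOpen S := by
    rw [hS]; exact Metric.isOpen_ball.sdiff isClosed_singleton
  have hsegc : IsCompact (segment ℝ (g c) c) := by
    rw [segment_eq_image']
    exact isCompact_Icc.image (by fun_prop)
  have hsegS : segment ℝ (g c) c ⊆ S := by
    intro x hx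
    rw [hS]
    refine ⟨(convex_ball c (Y / 4)).segment_subset hbB hcB hx, ?_⟩
    rintro rfl
    exact hseg hx
  obtain ⟨ρ, hρ, hρS⟩ := hsegc.exists_thickening_subset_open hSo hsegS
  obtain ⟨C, hC⟩ : ∃ C, C = Real.exp (1000 / ρ * ‖c - g c‖) := ⟨_, rfl⟩
  have hC1 : 1 ≤ C := by rw [hC]; exact Real.one_le_exp (by positivity)
  have hdist : ∀ n : ℕ, ‖h^[n] c - h^[n] (f c)‖ ≤ ‖h^[n] (g c) - h^[n] (f c)‖ * C := by
    intro n
    rw [hC]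
    have hSB : S ⊆ Metric.ball c (Y / 4) := by rw [hS]; exact sdiff_subset
    apply growth (E := fun z => h^[n] z - h^[n] (f c)) (S := S) hρ
    · intro x hx
      exact (Metric.ball_subset_thickening hx ρ).trans hρS
    · exact ((iter_diff hhd hhm n).mono (hSB.trans hBU)).sub_const _
    · intro x hx y hy hxy
      exact hinj n (hSB hx) (hSB hy) (sub_left_injective hxy)
    · intro z hz h0
      have h1 := hinj n (hSB hz) haB (sub_eq_zero.1 h0)
      rw [hS] at hz
      exact hz.2 h1
  have hη : 0 < 1 / (4 * C) := by positivity
  have hη1 : 1 / (4 * C) ≤ 1 := by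
    rw [div_le_one (by positivity)]; linarith
  obtain ⟨n, hn⟩ := slow_growth hhd hhm hhj hhs hYU hη
  obtain ⟨η, hηe⟩ : ∃ η, η = 1 / (4 * C) := ⟨_, rfl⟩
  have hηC : η * C = 1 / 4 := by rw [hηe]; field_simp
  rw [← hηe] at hη hη1 hn
  have hwU : h^[n] c ∈ UHP := iter_maps hhm n hYU
  rw [Function.iterate_succ_apply'] at hn
  have s1 := half_step hfd hfm hfj hwU hη hn
  have hn' : (g (g (h^[n] c))).im ≤ (1 + η) * (h^[n] c).im := by
    rw [← hsq _ hwU]; exact hn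
  have s2 := half_step hgd hgm hgj hwU hη hn'
  rw [← hsq _ hwU] at s2
  have hfw := iter_comm hhm hfc n hYU
  have hgw := iter_comm hhm hgc n hYU
  have hd1 := hdist n
  rw [← hfw, ← hgw] at hd1
  have hne : g (h^[n] c) ≠ f (h^[n] c) := by
    rw [hfw, hgw]
    intro he
    have := hinj n hbB haB he
    exact hseg (this ▸ left_mem_segment ℝ _ _)
  set w := h^[n] c
  have hu : 0 < ‖g w - f w‖ := norm_pos_iff.2 (sub_ne_zero.2 hne)
  have t1 : ‖2 * (g w - f w)‖ ≤ η * ‖f w - w‖ + η * ‖g w - w‖ := by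
    have : 2 * (g w - f w) = ((f (f w) - w) - 2 * (f w - w)) - ((f (f w) - w) - 2 * (g w - w)) := by
      ring
    rw [this]
    exact (norm_sub_le _ _).trans (add_le_add s1 s2)
  rw [norm_mul] at t1
  have t2 : ‖g w - w‖ ≤ ‖g w - f w‖ + ‖f w - w‖ := by
    have : g w - w = (g w - f w) + (f w - w) := by ring
    rw [this]; exact norm_add_le _ _
  rw [norm_sub_rev w (f w)] at hd1
  have t3 : ‖(2 : ℂ)‖ = 2 := by simp
  rw [t3] at t1
  have t4 := mul_le_mul_of_nonneg_left t2 hη.le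
  have t5 := mul_le_mul_of_nonneg_left hd1 hη.le
  have t6 : η * (‖g w - f w‖ * C) = ‖g w - f w‖ / 4 := by
    rw [mul_comm ‖g w - f w‖ C, ← mul_assoc, hηC]; ring
  have t7 : η * ‖g w - f w‖ ≤ ‖g w - f w‖ / 4 := by
    rw [← t6]
    apply mul_le_mul_of_nonneg_left _ hη.le
    nlinarith
  nlinarith

lemma segment_dichotomy {a b c : ℂ} (h1 : a ∈ segment ℝ b c) (h2 : b ∈ segment ℝ a c) :
    a = b := by
  rw [segment_symm, segment_eq_image'] at h1 h2
  obtain ⟨s, hs, h1⟩ := h1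
  obtain ⟨t, ht, h2⟩ := h2
  simp only [real_smul] at h1 h2
  have h3 : (1 - (s : ℂ) * t) * (a - c) = 0 := by
    linear_combination -h1 - (s : ℂ) * h2
  rcases mul_eq_zero.1 h3 with h | h
  · have h4 : s * t = 1 := by
      have : (s : ℂ) * t = 1 := by linear_combination -h
      exact_mod_cast this
    have h5 : s = 1 := by nlinarith [hs.1, hs.2, ht.1, ht.2]
    rw [h5] at h1
    rw [← h1]; simp
  · have : a = c := sub_eq_zero.1 h
    rw [this] at h2 ⊢
    rw [← h2]; simp

theorem composition_square_root_unique
    (f g : ℂ → ℂ)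
    (hfd : DifferentiableOn ℂ f UHP) (hfm : Set.MapsTo f UHP UHP)
    (hgd : DifferentiableOn ℂ g UHP) (hgm : Set.MapsTo g UHP UHP)
    (hfl : Tendsto (fun y : ℝ => f (Complex.I * y) / (Complex.I * y)) atTop (𝓝 1))
    (hgl : Tendsto (fun y : ℝ => g (Complex.I * y) / (Complex.I * y)) atTop (𝓝 1))
    (hsq : ∀ z ∈ UHP, f (f z) = g (g z)) :
    Set.EqOn f g UHP := by
  have hfj : ∀ z ∈ UHP, z.im ≤ (f z).im := fun z hz => julia hfd hfm hfl hz
  have hgj : ∀ z ∈ UHP, z.im ≤ (g z).im := fun z hz => julia hgd hgm hgl hz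
  have hev : ∀ᶠ Y : ℝ in atTop, f (I * Y) = g (I * Y) := by
    filter_upwards [disp_small hfl (by norm_num : (0 : ℝ) < 1 / 20),
      disp_small hgl (by norm_num : (0 : ℝ) < 1 / 20), eventually_gt_atTop 0] with Y h1 h2 hY
    apply segment_dichotomy (c := I * Y)
    · by_contra hc
      exact core f g hfd hfm hgd hgm hfl hfj hgj hsq hY (by linarith) (by linarith) hc
    · by_contra hc
      exact core g f hgd hgm hfd hfm hgl hgj hfj (fun z hz => (hsq z hz).symm) hY
        (by linarith) (by linarith) hc
  obtain ⟨Y0, hY0⟩ := eventually_atTop.1 (hev.and (eventually_gt_atTop 0))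
  have hpos : (0 : ℝ) < Y0 + 1 := by linarith [(hY0 Y0 le_rfl).2]
  have hconv : Convex ℝ UHP := convex_halfSpace_im_gt 0
  refine (hfd.analyticOnNhd isOpen_UHP).eqOn_of_preconnected_of_frequently_eq
    (hgd.analyticOnNhd isOpen_UHP) hconv.isPreconnected (I_mul_mem hpos) ?_
  have ht : Tendsto (fun y : ℝ => I * (y : ℂ)) (𝓝[≠] (Y0 + 1)) (𝓝[≠] (I * ((Y0 + 1 : ℝ) : ℂ))) := by
    apply tendsto_nhdsWithin_of_tendsto_nhds_of_eventually_within
    · apply Tendsto.mono_left _ nhdsWithin_le_nhds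
      exact Continuous.tendsto (by fun_prop) _
    · filter_upwards [self_mem_nhdsWithin] with y hy h
      apply hy
      have := mul_left_cancel₀ I_ne_zero h
      exact_mod_cast this
  apply ht.frequently
  apply Eventually.frequently
  have : ∀ᶠ y : ℝ in 𝓝[≠] (Y0 + 1), Y0 < y :=
    eventually_nhdsWithin_of_eventually_nhds (eventually_gt_nhds (by linarith))
  filter_upwards [this] with y hy
  exact (hY0 y hy.le).1
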